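/- For every surjective ℝ-algebra homomorphism γ : Cl(4,3) → Mat₈(ℝ) there exists a symmetric, nondegenerate bilinear form 𝓑 on ℝ⁸ = (Fin 8 → ℝ) that is admissible for γ, i.e. for all x ∈ Cl(4,3) and all s, t ∈ ℝ⁸ one has 𝓑((γ x).mulVec s, t) = 𝓑(s, (γ ((involute ∘ reverse) x)).mulVec t), where involute and reverse are the standard automorphism π and anti-automorphism τ of the Clifford algebra. -/

import Mathlib

/- Signature (4,3) quadratic form on ℝ⁷:
   Q x = x₀² + x₁² + x₂² + x₃² − x₄² − x₅² − x₆². -/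
noncomputable def sig43 : QuadraticForm ℝ (Fin 7 → ℝ) :=
  QuadraticMap.weightedSumSquares ℝ ![(1 : ℝ), 1, 1, 1, -1, -1, -1]

/- Standard basis of ℝ⁷. -/
noncomputable def stdBasis (i : Fin 7) : Fin 7 → ℝ := Pi.single i 1

/- The volume element ν = ι(e₀) ⋯ ι(e₆) of Cl(4,3). -/
noncomputable def vol : CliffordAlgebra sig43 :=
  CliffordAlgebra.ι sig43 (stdBasis 0) * CliffordAlgebra.ι sig43 (stdBasis 1) *
  CliffordAlgebra.ι sig43 (stdBasis 2) * CliffordAlgebra.ι sig43 (stdBasis 3) *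
  CliffordAlgebra.ι sig43 (stdBasis 4) * CliffordAlgebra.ι sig43 (stdBasis 5) *
  CliffordAlgebra.ι sig43 (stdBasis 6)

set_option linter.unusedSimpArgs false

open Matrix in
/-- Averaging: a finite family of pairwise anticommuting matrices with squares `±1`
preserves a positive definite form. -/
theorem exists_posDef_invariant (E : Fin 7 → Matrix (Fin 8) (Fin 8) ℝ) (ε : Fin 7 → ℝ)
    (hε : ∀ i, ε i * ε i = 1)
    (hsq : ∀ i, E i * E i = ε i • (1 : Matrix (Fin 8) (Fin 8) ℝ))
    (hanti : ∀ i j, i ≠ j → E i * E j = -(E j * E i)) (n : ℕ) (hn : n ≤ 7) :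
    ∃ G : Matrix (Fin 8) (Fin 8) ℝ, G.PosDef ∧
      ∀ i : Fin 7, i.val < n → (E i)ᵀ * G * E i = G := by
  induction n with
  | zero => exact ⟨1, Matrix.PosDef.one, fun i hi => absurd hi (Nat.not_lt_zero _)⟩
  | succ n ih =>
    obtain ⟨G, hG, hinv⟩ := ih (by omega)
    let k : Fin 7 := ⟨n, by omega⟩
    refine ⟨G + (E k)ᵀ * G * E k, ?_, ?_⟩
    · refine hG.add_posSemidef ?_
      have := hG.posSemidef.conjTranspose_mul_mul_same (E k)
      simpa [Matrix.conjTranspose_eq_transpose_of_trivial] using this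
    · intro i hi
      by_cases hik : i = k
      · subst hik
        have h1 : (E k)ᵀ * ((E k)ᵀ * G * E k) * E k = (E k * E k)ᵀ * G * (E k * E k) := by
          simp only [Matrix.transpose_mul, Matrix.mul_assoc]
        rw [Matrix.mul_add, Matrix.add_mul, h1, hsq]
        simp [smul_smul, hε, add_comm]
      · have hlt : i.val < n := by
          have : i.val ≠ n := fun h => hik (Fin.ext h)
          omega
        have h1 : (E i)ᵀ * ((E k)ᵀ * G * E k) * E i = (E k * E i)ᵀ * G * (E k * E i) := by
          simp only [Matrix.transpose_mul, Matrix.mul_assoc]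
        have h2 : (E i * E k)ᵀ * G * (E i * E k) = (E k)ᵀ * ((E i)ᵀ * G * E i) * E k := by
          simp only [Matrix.transpose_mul, Matrix.mul_assoc]
        have h3 : E k * E i = -(E i * E k) := hanti k i (Ne.symm hik)
        rw [Matrix.mul_add, Matrix.add_mul, h1, h3, Matrix.transpose_neg, Matrix.neg_mul,
          Matrix.neg_mul, Matrix.mul_neg, neg_neg, h2, hinv i hlt]

open Matrix in
/-- The symmetric invertible matrix for which all generators are skew. -/
theorem exists_skew_matrix (E : Fin 7 → Matrix (Fin 8) (Fin 8) ℝ) (ε : Fin 7 → ℝ)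
    (hε : ε = ![(1 : ℝ), 1, 1, 1, -1, -1, -1])
    (hsq : ∀ i, E i * E i = ε i • (1 : Matrix (Fin 8) (Fin 8) ℝ))
    (hanti : ∀ i j, i ≠ j → E i * E j = -(E j * E i)) :
    ∃ M : Matrix (Fin 8) (Fin 8) ℝ, Mᵀ = M ∧ IsUnit M ∧ ∀ i, (E i)ᵀ * M = -(M * E i) := by
  have hεε : ∀ i, ε i * ε i = 1 := by
    intro i; subst hε; fin_cases i <;> simp
  obtain ⟨G, hG, hinv⟩ := exists_posDef_invariant E ε hεε hsq hanti 7 le_rfl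
  have hGt : Gᵀ = G := by
    have := hG.isHermitian
    rwa [Matrix.IsHermitian, Matrix.conjTranspose_eq_transpose_of_trivial] at this
  have hadj : ∀ i, (E i)ᵀ * G = ε i • (G * E i) := by
    intro i
    have h := congrArg (fun X => X * E i) (hinv i i.isLt)
    simp only [Matrix.mul_assoc, hsq] at h
    rw [← h]
    simp [smul_smul, hεε]
  have h4 : ∀ i : Fin 7, i.val < 4 → ε i = 1 := by
    intro i hi; subst hε; fin_cases i <;> simp at hi ⊢
  have h7 : ∀ i : Fin 7, 4 ≤ i.val → ε i = -1 := by
    intro i hi; subst hε; fin_cases i <;> simp at hi ⊢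
  have hs : ∀ i : Fin 7, i.val < 4 → E i * E i = 1 := fun i hi => by rw [hsq, h4 i hi, one_smul]
  have a : ∀ i : Fin 7, i.val < 4 → (E i)ᵀ * G = G * E i := fun i hi => by
    rw [hadj, h4 i hi, one_smul]
  have sw : ∀ i j, i ≠ j → ∀ X, E i * (E j * X) = -(E j * (E i * X)) := fun i j hij X => by
    rw [← Matrix.mul_assoc, hanti i j hij, Matrix.neg_mul, Matrix.mul_assoc]
  have sq' : ∀ i : Fin 7, i.val < 4 → ∀ X, E i * (E i * X) = X := fun i hi X => by
    rw [← Matrix.mul_assoc, hs i hi, Matrix.one_mul]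
  obtain ⟨P, hP⟩ : ∃ P, P = E 0 * (E 1 * (E 2 * E 3)) := ⟨_, rfl⟩
  have c10 := hanti 1 0 (by decide)
  have c20 := hanti 2 0 (by decide)
  have c30 := hanti 3 0 (by decide)
  have c21 := hanti 2 1 (by decide)
  have c31 := hanti 3 1 (by decide)
  have c32 := hanti 3 2 (by decide)
  have s10 := sw 1 0 (by decide)
  have s20 := sw 2 0 (by decide)
  have s30 := sw 3 0 (by decide)
  have s21 := sw 2 1 (by decide)
  have s31 := sw 3 1 (by decide)
  have s32 := sw 3 2 (by decide)
  have q0 := sq' 0 (by decide)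
  have q1 := sq' 1 (by decide)
  have q2 := sq' 2 (by decide)
  have q3 := sq' 3 (by decide)
  have r0 := hs 0 (by decide)
  have r1 := hs 1 (by decide)
  have r2 := hs 2 (by decide)
  have r3 := hs 3 (by decide)
  have hPP : P * P = 1 := by
    subst hP
    simp only [Matrix.mul_assoc, c10, c20, c30, c21, c31, c32, s10, s20, s30, s21, s31, s32,
      q0, q1, q2, q3, r0, r1, r2, r3, Matrix.mul_neg, neg_neg]
  have hrev : E 3 * (E 2 * (E 1 * E 0)) = P := by
    subst hP
    simp only [Matrix.mul_assoc, c10, c20, c30, c21, c31, c32, s10, s20, s30, s21, s31, s32,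
      q0, q1, q2, q3, r0, r1, r2, r3, Matrix.mul_neg, neg_neg]
  have hcomm : ∀ i, E i * P = -(ε i • (P * E i)) := by
    intro i
    by_cases hi : i.val < 4
    · rw [h4 i hi, one_smul]
      subst hP
      obtain rfl | rfl | rfl | rfl : i = 0 ∨ i = 1 ∨ i = 2 ∨ i = 3 := by
        revert hi; revert i; decide
      all_goals
        simp only [Matrix.mul_assoc, c10, c20, c30, c21, c31, c32, s10, s20, s30, s21, s31, s32,
          q0, q1, q2, q3, r0, r1, r2, r3, Matrix.mul_neg, neg_neg, Matrix.mul_one]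
    · have n0 : i ≠ 0 := by rintro rfl; simp at hi
      have n1 : i ≠ 1 := by rintro rfl; simp at hi
      have n2 : i ≠ 2 := by rintro rfl; simp at hi
      have n3 : i ≠ 3 := by rintro rfl; simp at hi
      rw [h7 i (by omega), neg_one_smul, neg_neg, hP, sw i 0 n0, sw i 1 n1, sw i 2 n2,
        hanti i 3 n3]
      simp only [Matrix.mul_assoc, Matrix.mul_neg, neg_neg]
  have hPt : Pᵀ * G = G * P := by
    rw [← hrev]
    nth_rewrite 1 [hrev]
    rw [hP]
    simp only [Matrix.transpose_mul, Matrix.mul_assoc]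
    rw [a 0 (by decide), ← Matrix.mul_assoc (E 1)ᵀ, a 1 (by decide), Matrix.mul_assoc,
      ← Matrix.mul_assoc (E 2)ᵀ, a 2 (by decide), Matrix.mul_assoc,
      ← Matrix.mul_assoc (E 3)ᵀ, a 3 (by decide), Matrix.mul_assoc]
  refine ⟨G * P, ?_, ?_, ?_⟩
  · rw [Matrix.transpose_mul, hGt, hPt]
  · exact hG.isUnit.mul (IsUnit.of_mul_eq_one P hPP)
  · intro i
    rw [← Matrix.mul_assoc, hadj, Matrix.smul_mul, Matrix.mul_assoc, hcomm, Matrix.mul_neg,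
      Matrix.mul_smul, smul_neg, smul_smul, hεε, one_smul, Matrix.mul_assoc]

theorem sig43_stdBasis (i : Fin 7) :
    sig43 (stdBasis i) = (![(1 : ℝ), 1, 1, 1, -1, -1, -1] : Fin 7 → ℝ) i := by
  simp [sig43, stdBasis, QuadraticMap.weightedSumSquares_apply, Pi.single_apply]

theorem sig43_polar (i j : Fin 7) (h : i ≠ j) :
    QuadraticMap.polar sig43 (stdBasis i) (stdBasis j) = 0 := by
  unfold QuadraticMap.polar
  simp only [sig43, stdBasis, QuadraticMap.weightedSumSquares_apply, ← Finset.sum_sub_distrib]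
  refine Finset.sum_eq_zero fun k _ => ?_
  by_cases h1 : k = i
  · subst h1; simp [Pi.single_apply, h]
  · simp [Pi.single_apply, h1]


/-- every surjective ℝ-algebra homomorphism γ : Cl(4,3) → Mat₈(ℝ)
admits a symmetric nondegenerate admissible bilinear pairing 𝓑 on ℝ⁸:
𝓑((γ x) s, t) = 𝓑(s, (γ ((π ∘ τ) x)) t) for the standard automorphism π =
involute and anti-automorphism τ = reverse. -/
theorem exists_admissible_pairing
    (γ : CliffordAlgebra sig43 →ₐ[ℝ] Matrix (Fin 8) (Fin 8) ℝ)
    (hγ : Function.Surjective γ) :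
    ∃ B : (Fin 8 → ℝ) →ₗ[ℝ] (Fin 8 → ℝ) →ₗ[ℝ] ℝ,
      (∀ s t, B s t = B t s) ∧
      (∀ s, (∀ t, B s t = 0) → s = 0) ∧
      (∀ (x : CliffordAlgebra sig43) (s t : Fin 8 → ℝ),
        B ((γ x).mulVec s) t =
          B s ((γ ((CliffordAlgebra.involute ∘ CliffordAlgebra.reverse) x)).mulVec t)) := by
  classical
  let E : Fin 7 → Matrix (Fin 8) (Fin 8) ℝ := fun i => γ (CliffordAlgebra.ι sig43 (stdBasis i))
  obtain ⟨M, hMt, hMu, hM⟩ := exists_skew_matrix E _ rfl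
    (fun i => by
      change γ _ * γ _ = _
      rw [← map_mul, CliffordAlgebra.ι_sq_scalar, sig43_stdBasis, AlgHom.commutes,
        Algebra.algebraMap_eq_smul_one])
    (fun i j hij => by
      change γ _ * γ _ = -(γ _ * γ _)
      rw [← map_mul γ, ← map_mul γ, eq_neg_iff_add_eq_zero, ← map_add γ,
        CliffordAlgebra.ι_mul_ι_add_swap, sig43_polar i j hij, map_zero, map_zero])
  have key : ∀ x : CliffordAlgebra sig43, (γ x).transpose * M =
      M * γ (CliffordAlgebra.involute (CliffordAlgebra.reverse x)) := by
    intro x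
    induction x using CliffordAlgebra.induction with
    | algebraMap r =>
      simp [CliffordAlgebra.reverse.commutes, Algebra.algebraMap_eq_smul_one]
    | ι v =>
      have hv : v = ∑ i, v i • stdBasis i := by
        ext k
        simp [stdBasis, Pi.single_apply]
      rw [CliffordAlgebra.reverse_ι, CliffordAlgebra.involute_ι, map_neg, Matrix.mul_neg, hv]
      simp only [map_sum, map_smul, Matrix.transpose_sum, Matrix.transpose_smul, Matrix.sum_mul,
        Matrix.mul_sum, Matrix.smul_mul, Matrix.mul_smul, ← Finset.sum_neg_distrib, ← smul_neg]
      exact Finset.sum_congr rfl fun i _ => congrArg _ (hM i)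
    | mul a b ha hb =>
      rw [CliffordAlgebra.reverse.map_mul, map_mul, map_mul, map_mul, Matrix.transpose_mul,
        Matrix.mul_assoc, ha, ← Matrix.mul_assoc, hb, Matrix.mul_assoc]
    | add a b ha hb =>
      simp only [map_add, Matrix.transpose_add, Matrix.add_mul, Matrix.mul_add, ha, hb]
  refine ⟨Matrix.toLinearMap₂' ℝ M, ?_, ?_, ?_⟩
  · intro s t
    rw [Matrix.toLinearMap₂'_apply', Matrix.toLinearMap₂'_apply', Matrix.dotProduct_mulVec,
      ← Matrix.mulVec_transpose, hMt, dotProduct_comm]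
  · intro s hs
    have h0 : Matrix.vecMul s M = 0 := by
      apply dotProduct_eq_zero
      intro t
      rw [← Matrix.dotProduct_mulVec, ← Matrix.toLinearMap₂'_apply', hs]
    exact Matrix.vecMul_injective_of_isUnit hMu (by simpa using h0)
  · intro x s t
    rw [Matrix.toLinearMap₂'_apply', Matrix.toLinearMap₂'_apply', Function.comp_apply,
      Matrix.mulVec_mulVec, ← key, ← Matrix.mulVec_mulVec, Matrix.dotProduct_mulVec s,
      Matrix.vecMul_transpose]
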